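/- arXiv:2401.08475 — 13 statements merged into one kernel-verified Lean document; each statement's English description precedes it below -/
import Mathlib

section
/- Let R ⊆ X × Y be a relation between finite sets, and let A ⊆ X. Define the relation R_St ⊆ X × Y_A, where Y_A = ⋃_{x∈A} R(x), by (x,y) ∈ R_St iff y ∈ Y_A and (x,y) ∈ R. Then the Dowker complex K_{R_St} equals the union of closed stars ⋃_{x∈A} St̄(x) taken in K_R; that is, a nonempty finite set σ ⊆ X is a simplex of K_{R_St} if and only if σ belongs to St̄_{K_R}(x) for some x ∈ A. -/
/-- The Dowker complex of a relation `R ⊆ X × Y`: its simplices are the nonempty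
finite subsets `σ ⊆ X` such that some `y ∈ Y` is related to every element of `σ`. -/
def DowkerK {X Y : Type*} (R : X → Y → Prop) : Set (Finset X) :=
  {σ | σ.Nonempty ∧ ∃ y, ∀ x ∈ σ, R x y}

/-- The closed star of a vertex `x` in a simplicial complex `K`. -/
def ClosedStar {V : Type*} (K : Set (Finset V)) (x : V) : Set (Finset V) :=
  {σ | σ ∈ K ∧ ∃ τ ∈ K, σ ⊆ τ ∧ x ∈ τ}

/-- For a relation `R ⊆ X × Y` between finite sets and `A ⊆ X`, the Dowker
complex of the relation `R_St ⊆ X × Y_A` (where `Y_A = ⋃_{x∈A} R(x)` and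
`(x,y) ∈ R_St ↔ y ∈ Y_A ∧ (x,y) ∈ R`) equals the union of the closed stars
`⋃_{x∈A} St̄(x)` taken in `K_R`. -/
theorem dowker_star_relation {X Y : Type*} [Fintype X] [Fintype Y]
    (R : X → Y → Prop) (A : Set X) :
    ∀ σ : Finset X,
      σ ∈ DowkerK (fun x y => (∃ a ∈ A, R a y) ∧ R x y) ↔
        ∃ x ∈ A, σ ∈ ClosedStar (DowkerK R) x := by
  classical
  intro σ
  constructor
  · rintro ⟨⟨v, hv⟩, y, hy⟩
    obtain ⟨⟨a, ha, hay⟩, -⟩ := hy v hv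
    -- The common witness `y` lies in `R(a)`, so `insert a σ` is a simplex containing `σ` and `a`.
    refine ⟨a, ha, ⟨⟨v, hv⟩, y, fun x hx => (hy x hx).2⟩, insert a σ,
      ⟨Finset.insert_nonempty a σ, y, fun x hx => ?_⟩,
      Finset.subset_insert a σ, Finset.mem_insert_self a σ⟩
    rcases Finset.mem_insert.mp hx with rfl | hx
    · exact hay
    · exact (hy x hx).2
  · rintro ⟨a, ha, ⟨hne, -⟩, τ, ⟨-, y, hy⟩, hsub, haτ⟩
    -- The witness of `τ`, not that of `σ`, is used: it is related to `a ∈ τ`.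
    exact ⟨hne, y, fun x hx => ⟨⟨a, ha, hy a haτ⟩, hy x (hsub hx)⟩⟩
end

section
/- Let R ⊆ X × Y be a relation between finite sets and suppose x₁, x₂ ∈ X are distinct with R(x₁) ⊆ R(x₂). Let R′ ⊆ (X \ {x₁}) × Y be the restriction of R, i.e., R′(x) = R(x) for all x ∈ X \ {x₁}. Then the Dowker complexes L_R and L_{R′} on Y are equal: a nonempty finite subset τ ⊆ Y is a simplex of L_R if and only if it is a simplex of L_{R′}. -/
/-- The Dowker complex `L_R` of a relation `R ⊆ X × Y`: its simplices are the
nonempty finite subsets `τ ⊆ Y` such that some `x ∈ X` is related to every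
element of `τ`. -/
def DowkerL {X Y : Type*} (R : X → Y → Prop) : Set (Finset Y) :=
  {τ | τ.Nonempty ∧ ∃ x, ∀ y ∈ τ, R x y}

/-- If `x₁ ≠ x₂` and `R(x₁) ⊆ R(x₂)`, then removing the row `x₁`
(restricting `R` to `(X \ {x₁}) × Y`) does not change the Dowker complex on `Y`:
`L_R = L_{R′}`. -/
theorem dowkerL_remove_dominated_row {X Y : Type*} [Fintype X] [Fintype Y]
    (R : X → Y → Prop) (x₁ x₂ : X) (hne : x₁ ≠ x₂)
    (hsub : ∀ y, R x₁ y → R x₂ y) :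
    ∀ τ : Finset Y,
      τ ∈ DowkerL R ↔ τ ∈ DowkerL (fun (x : {x : X // x ≠ x₁}) y => R x.1 y) := by
  intro τ
  constructor
  · rintro ⟨hτ, x, hx⟩
    by_cases h : x = x₁
    · -- A simplex witnessed by the removed row is also witnessed by `x₂`.
      subst h
      exact ⟨hτ, ⟨x₂, hne.symm⟩, fun y hy => hsub y (hx y hy)⟩
    · exact ⟨hτ, ⟨x, h⟩, hx⟩
  · rintro ⟨hτ, x, hx⟩
    exact ⟨hτ, x.1, hx⟩
end

section
/- Let R ⊆ X × Y be a relation between finite sets such that R⁻¹(y) ≠ ∅ for every y ∈ Y and R is column irreducible. Then the map y ↦ R⁻¹(y) is a bijection from Y onto the set of toplexes (inclusion-maximal simplices) of the Dowker complex K_R. -/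
/-- A toplex of a simplicial complex: an inclusion-maximal simplex. -/
def IsToplex {V : Type*} (K : Set (Finset V)) (σ : Finset V) : Prop :=
  σ ∈ K ∧ ∀ τ ∈ K, σ ⊆ τ → σ = τ

/-- If `R ⊆ X × Y` is a relation between finite sets with all columns
nonempty and `R` is column irreducible (for distinct `y₁, y₂`, `R⁻¹(y₁) ⊄ R⁻¹(y₂)`),
then `y ↦ R⁻¹(y)` is a bijection from `Y` onto the set of toplexes of `K_R`. -/
theorem column_irreducible_toplex_bijection {X Y : Type*} [Fintype X] [Fintype Y]
    [DecidableEq X] (R : X → Y → Prop) [∀ x y, Decidable (R x y)]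
    (hcol : ∀ y, ∃ x, R x y)
    (hirr : ∀ y₁ y₂ : Y, y₁ ≠ y₂ → ¬ ({x | R x y₁} ⊆ {x | R x y₂})) :
    Set.BijOn (fun y => Finset.univ.filter (fun x => R x y)) Set.univ
      {σ : Finset X | IsToplex (DowkerK R) σ} := by
  have hmem : ∀ y, (Finset.univ.filter (fun x => R x y)) ∈ DowkerK R := by
    intro y
    obtain ⟨x, hx⟩ := hcol y
    exact ⟨⟨x, by simpa using hx⟩, y, fun x hx => by simpa using hx⟩
  refine ⟨?_, ?_, ?_⟩
  · intro y _
    refine ⟨hmem y, ?_⟩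
    rintro τ ⟨_, z, hz⟩ hsub
    have hle : {x | R x y} ⊆ {x | R x z} := fun x hx =>
      hz x (hsub (by simpa using hx))
    -- The simplex `τ` lies in the column of `z`, so irreducibility forces `y = z`.
    obtain rfl : y = z := by
      by_contra hne
      exact hirr y z hne hle
    exact hsub.antisymm fun x hx => by simpa using hz x hx
  · intro y₁ _ y₂ _ heq
    by_contra hne
    refine hirr y₁ y₂ hne fun x hx => ?_
    have hx₁ : x ∈ Finset.univ.filter (fun x => R x y₁) := by simpa using hx
    have hx₂ : x ∈ Finset.univ.filter (fun x => R x y₂) :=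
      (Finset.ext_iff.mp heq x).mp hx₁
    simpa using hx₂
  · rintro σ ⟨⟨_, y, hy⟩, hmax⟩
    exact ⟨y, Set.mem_univ y,
      (hmax _ (hmem y) fun x hx => by simpa using hy x hx).symm⟩
end

section
/- Let R ⊆ X × Y be a column irreducible relation between finite sets, let x_i, x_j ∈ X be distinct, and let R′ be the reduced relation obtained from R by replacing x_i and x_j with a new element z. If y₁, y₂ ∈ Y are distinct and y₁ ∉ R′(z) or y₂ ∉ R′(z), then R′⁻¹(y₁) ⊄ R′⁻¹(y₂) and R′⁻¹(y₂) ⊄ R′⁻¹(y₁). -/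
/-!
If `R′⁻¹(y) ⊆ R′⁻¹(y')` and `z` is missing from one of the two sets, then `z ∉ R′⁻¹(y)`. Hence
neither `xi` nor `xj` lies in `R⁻¹(y)`, and since `R` and `R′` agree on all other rows,
`R⁻¹(y) ⊆ R⁻¹(y')`, contradicting column irreducibility. The hypothesis is symmetric in the
two columns, so `subset_of_reducedRel_subset` applies in both directions.
-/

/-- The reduced relation `R′ ⊆ X′ × Y` obtained from `R ⊆ X × Y` by replacing the two
rows `xi` and `xj` by a new element `z` (encoded as `none`), with
`R′(z) = R(xi) ∪ R(xj)` and `R′(x) = R(x)` for `x ∈ X \ {xi, xj}`. -/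
def ReducedRel {X Y : Type*} (R : X → Y → Prop) (xi xj : X) :
    Option {x : X // x ≠ xi ∧ x ≠ xj} → Y → Prop
  | none, y => R xi y ∨ R xj y
  | some x, y => R x.1 y

/-- An inclusion of columns of the reduced relation lifts to the original relation, provided the
merged row misses at least one of the two columns. -/
theorem subset_of_reducedRel_subset {X Y : Type*} (R : X → Y → Prop) (xi xj : X) (y y' : Y)
    (hz : ¬ ReducedRel R xi xj none y ∨ ¬ ReducedRel R xi xj none y')
    (h : {w | ReducedRel R xi xj w y} ⊆ {w | ReducedRel R xi xj w y'}) :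
    {x | R x y} ⊆ {x | R x y'} := by
  have hz' : ¬ ReducedRel R xi xj none y := hz.elim id fun hn hy => hn (@h none hy)
  intro x hx
  have hxi : x ≠ xi := by
    rintro rfl
    exact hz' (Or.inl hx)
  have hxj : x ≠ xj := by
    rintro rfl
    exact hz' (Or.inr hx)
  exact @h (some ⟨x, hxi, hxj⟩) hx

/-- Let `R` be column irreducible, `xi ≠ xj`, and `R′` the reduced
relation obtained by replacing `xi, xj` by `z`. If `y₁ ≠ y₂` and `y₁ ∉ R′(z)` or
`y₂ ∉ R′(z)`, then `R′⁻¹(y₁) ⊄ R′⁻¹(y₂)` and `R′⁻¹(y₂) ⊄ R′⁻¹(y₁)`. -/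
theorem reduced_columns_incomparable {X Y : Type*} [Fintype X] [Fintype Y]
    (R : X → Y → Prop) (xi xj : X) (hij : xi ≠ xj)
    (hirr : ∀ y₁ y₂ : Y, y₁ ≠ y₂ → ¬ ({x | R x y₁} ⊆ {x | R x y₂}))
    (y₁ y₂ : Y) (hy : y₁ ≠ y₂)
    (hcase : ¬ ReducedRel R xi xj none y₁ ∨ ¬ ReducedRel R xi xj none y₂) :
    ¬ ({w | ReducedRel R xi xj w y₁} ⊆ {w | ReducedRel R xi xj w y₂}) ∧
    ¬ ({w | ReducedRel R xi xj w y₂} ⊆ {w | ReducedRel R xi xj w y₁}) := by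
  exact ⟨fun h => hirr y₁ y₂ hy (subset_of_reducedRel_subset R xi xj y₁ y₂ hcase h),
    fun h => hirr y₂ y₁ hy.symm (subset_of_reducedRel_subset R xi xj y₂ y₁ hcase.symm h)⟩
end

section
/- Let R ⊆ X × Y be a relation between finite sets, let A ⊆ X with ⋃_{x∈A} R(x) ≠ ∅, and let z ∉ X. Define R′ ⊆ (X ∪ {z}) × Y by R′(z) = ⋃_{x∈A} R(x) and R′(x) = R(x) for x ∈ X. Then K_{R′} = K_R ∪ (z * L), where L = ⋃_{x∈A} St̄_{K_R}(x) is the union of the closed stars of the vertices of A in K_R. -/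
/-- The simplicial cone `z * L` on a collection of simplices `L`:
`L ∪ {{z}} ∪ {σ ∪ {z} : σ ∈ L}`. -/
def Cone {V : Type*} [DecidableEq V] (z : V) (L : Set (Finset V)) : Set (Finset V) :=
  L ∪ {{z}} ∪ {τ | ∃ σ ∈ L, τ = insert z σ}

/-- Let `R ⊆ X × Y` be a relation between finite sets, `A ⊆ X` with
`⋃_{x∈A} R(x) ≠ ∅`, and `z ∉ X` a new element (encoded by `Option X` with `z = none`).
Define `R′` on `(X ∪ {z}) × Y` by `R′(z) = ⋃_{x∈A} R(x)` and `R′(x) = R(x)`.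
Then `K_{R′} = K_R ∪ (z * L)` where `L = ⋃_{x∈A} St̄_{K_R}(x)`. -/
theorem dowker_add_cone {X Y : Type*} [Fintype X] [Fintype Y] [DecidableEq X]
    (R : X → Y → Prop) (A : Set X) (hA : ∃ y, ∃ x ∈ A, R x y) :
    DowkerK (fun (w : Option X) y => w.elim (∃ x ∈ A, R x y) (fun x => R x y)) =
      {σ | ∃ σ₀ ∈ DowkerK R, σ = σ₀.image some} ∪
        Cone (none : Option X)
          {σ | ∃ σ₀, (∃ x ∈ A, σ₀ ∈ ClosedStar (DowkerK R) x) ∧ σ = σ₀.image some} := by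
  ext σ
  constructor
  · rintro ⟨hne, y, hy⟩
    have hR : ∀ x ∈ σ.eraseNone, R x y := fun x hx => hy (some x) (by simpa using hx)
    by_cases hn : none ∈ σ
    · right
      obtain ⟨a, ha, hay⟩ : ∃ x ∈ A, R x y := hy none hn
      have hσ : σ = insert none (σ.eraseNone.image some) := by
        ext w
        cases w <;> simp [hn]
      rcases σ.eraseNone.eq_empty_or_nonempty with he | he
      · left; right
        rw [he] at hσ
        simpa using hσ
      · right
        refine ⟨_, ⟨σ.eraseNone, ⟨a, ha, ⟨he, y, hR⟩, insert a σ.eraseNone,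
          ⟨Finset.insert_nonempty _ _, y, ?_⟩, Finset.subset_insert _ _,
          Finset.mem_insert_self _ _⟩, rfl⟩, hσ⟩
        intro x hx
        rcases Finset.mem_insert.1 hx with rfl | hx
        · exact hay
        · exact hR x hx
    · left
      have hσ : σ = σ.eraseNone.image some := by
        ext w
        cases w <;> simp [hn]
      refine ⟨σ.eraseNone, ⟨?_, y, hR⟩, hσ⟩
      rw [hσ] at hne
      exact Finset.image_nonempty.1 hne
  · have base : ∀ σ₀ ∈ DowkerK R, σ₀.image some ∈
        DowkerK (fun (w : Option X) y => w.elim (∃ x ∈ A, R x y) (fun x => R x y)) := by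
      rintro σ₀ ⟨hne, y, hy⟩
      refine ⟨hne.image _, y, ?_⟩
      intro w hw
      obtain ⟨x, hx, rfl⟩ := Finset.mem_image.1 hw
      exact hy x hx
    rintro (⟨σ₀, h, rfl⟩ | (⟨σ₀, ⟨a, -, h, -⟩, rfl⟩ | rfl) |
      ⟨_, ⟨σ₀, ⟨a, ha, -, τ, ⟨-, y, hy⟩, hsub, haτ⟩, rfl⟩, rfl⟩)
    · exact base σ₀ h
    · exact base σ₀ h
    · obtain ⟨y, hy⟩ := hA
      refine ⟨Finset.singleton_nonempty _, y, ?_⟩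
      intro w hw
      obtain rfl := Finset.mem_singleton.1 hw
      exact hy
    · refine ⟨Finset.insert_nonempty _ _, y, ?_⟩
      intro w hw
      rcases Finset.mem_insert.1 hw with rfl | hw
      · exact ⟨a, ha, hy a haτ⟩
      · obtain ⟨x, hx, rfl⟩ := Finset.mem_image.1 hw
        exact hy x (hsub hx)
end

section
/- Let K be a finite abstract simplicial complex, A a finite set of vertices of K, L = ⋃_{x∈A} St̄(x) the union of their closed stars, z an element that is not a vertex of K, and K′ = K ∪ (z*L). Then z dominates every x ∈ A in K′: every toplex (inclusion-maximal simplex) of K′ that contains x also contains z. -/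
/-- An abstract simplicial complex: a collection of nonempty finite sets closed
under taking nonempty subsets. -/
def IsComplex {V : Type*} (K : Set (Finset V)) : Prop :=
  (∀ σ ∈ K, σ.Nonempty) ∧ (∀ σ ∈ K, ∀ τ, τ ⊆ σ → τ.Nonempty → τ ∈ K)

/-- Let `K` be a finite abstract simplicial complex, `A` a finite set of
vertices of `K`, `L = ⋃_{x∈A} St̄(x)`, `z` not a vertex of `K`, and `K′ = K ∪ (z*L)`.
Then `z` dominates every `x ∈ A` in `K′`: every toplex of `K′` containing `x` also
contains `z`. -/
theorem cone_dominates {V : Type*} [DecidableEq V] (K : Set (Finset V))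
    (hK : IsComplex K) (hfin : K.Finite)
    (A : Set V) (hAfin : A.Finite) (hAvert : ∀ x ∈ A, ∃ σ ∈ K, x ∈ σ)
    (z : V) (hz : ∀ σ ∈ K, z ∉ σ) :
    ∀ x ∈ A, ∀ σ : Finset V,
      IsToplex (K ∪ Cone z {σ | ∃ x ∈ A, σ ∈ ClosedStar K x}) σ → x ∈ σ → z ∈ σ := by
  intro x hx σ hσ hxσ
  obtain ⟨hmem, hmax⟩ := hσ
  -- A simplex of `K` through `x` lies in the closed star of `x`, so `insert z σ` lies in the cone
  -- and maximality forces `σ = insert z σ`.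
  have key : σ ∈ K → z ∈ σ := fun h => by
    have hcone : insert z σ ∈ K ∪ Cone z {σ | ∃ x ∈ A, σ ∈ ClosedStar K x} :=
      Or.inr (Or.inr ⟨σ, ⟨x, hx, h, σ, h, subset_rfl, hxσ⟩, rfl⟩)
    rw [hmax _ hcone (Finset.subset_insert z σ)]
    exact Finset.mem_insert_self z σ
  rcases hmem with h | (⟨_, _, h, _⟩ | h) | ⟨τ, _, rfl⟩
  · exact key h
  · exact key h
  · rw [Set.mem_singleton_iff.mp h]
    exact Finset.mem_singleton_self z
  · exact Finset.mem_insert_self z τ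
end

section
/- Let K be a finite abstract simplicial complex, A a nonempty finite set of vertices of K, L = ⋃_{x∈A} St̄(x), z not a vertex of K, K′ = K ∪ (z*L), and K″ = {σ ∈ K′ : σ ∩ A = ∅} (the complex obtained from K′ by strong collapsing all vertices of A onto z). Then the map sending a simplex σ ∈ K to (σ \ A) ∪ {z} if σ ∩ A ≠ ∅ and to σ otherwise is a well-defined surjection from the simplices of K onto the simplices of K″. -/
/-- Let `K` be a finite abstract simplicial complex, `A` a nonempty
finite set of vertices of `K`, `L = ⋃_{x∈A} St̄(x)`, `z` not a vertex of `K`,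
`K′ = K ∪ (z*L)` and `K″ = {σ ∈ K′ : σ ∩ A = ∅}`. Then the map sending `σ ∈ K` to
`(σ \ A) ∪ {z}` if `σ ∩ A ≠ ∅` and to `σ` otherwise is a well-defined surjection
from the simplices of `K` onto the simplices of `K″`. -/
theorem collapse_map_surjective {V : Type*} [DecidableEq V] (K : Set (Finset V))
    (hK : IsComplex K) (hfin : K.Finite)
    (A : Finset V) (hA : A.Nonempty) (hAvert : ∀ x ∈ A, ∃ σ ∈ K, x ∈ σ)
    (z : V) (hz : ∀ σ ∈ K, z ∉ σ) :
    Set.MapsTo (fun σ => if (σ ∩ A).Nonempty then insert z (σ \ A) else σ) K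
        {σ ∈ K ∪ Cone z {σ | ∃ x ∈ A, σ ∈ ClosedStar K x} | σ ∩ A = ∅} ∧
      Set.SurjOn (fun σ => if (σ ∩ A).Nonempty then insert z (σ \ A) else σ) K
        {σ ∈ K ∪ Cone z {σ | ∃ x ∈ A, σ ∈ ClosedStar K x} | σ ∩ A = ∅} := by
  have hzA : z ∉ A := fun h => by
    obtain ⟨σ, hσ, hzσ⟩ := hAvert z h
    exact hz σ hσ hzσ
  constructor
  · intro σ hσ
    by_cases h : (σ ∩ A).Nonempty
    · simp only [h, if_true]
      refine ⟨Or.inr ?_, ?_⟩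
      -- `σ \ A` may be empty, in which case the image is the apex `{z}`.
      · rcases (σ \ A).eq_empty_or_nonempty with he | hne
        · left; right
          simp [he]
        · right
          obtain ⟨x, hx⟩ := h
          rw [Finset.mem_inter] at hx
          exact ⟨σ \ A, ⟨x, hx.2, hK.2 σ hσ _ Finset.sdiff_subset hne, σ, hσ,
            Finset.sdiff_subset, hx.1⟩, rfl⟩
      · rw [Finset.insert_inter_of_notMem hzA, Finset.sdiff_inter_self]
    · simp only [h, if_false]
      exact ⟨Or.inl hσ, Finset.not_nonempty_iff_eq_empty.mp h⟩
  · have key : ∀ x ∈ A, ∀ σ : Finset V, σ ∩ A = ∅ → insert x σ ∈ K →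
        insert z σ ∈ (fun σ => if (σ ∩ A).Nonempty then insert z (σ \ A) else σ) '' K := by
      intro x hx σ hσA hmem
      refine ⟨insert x σ, hmem, ?_⟩
      have hne : (insert x σ ∩ A).Nonempty := ⟨x, by simp [hx]⟩
      simp only [hne, if_true]
      rw [Finset.insert_sdiff_of_mem _ hx,
        Finset.sdiff_eq_self_of_disjoint (Finset.disjoint_iff_inter_eq_empty.mpr hσA)]
    have fixed : ∀ τ ∈ K, τ ∩ A = ∅ →
        τ ∈ (fun σ => if (σ ∩ A).Nonempty then insert z (σ \ A) else σ) '' K :=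
      fun τ hτ h => ⟨τ, hτ, by simp [h]⟩
    rintro τ ⟨hτ | (⟨x, -, hτ, -⟩ | hτ) | ⟨σ, ⟨x, hx, -, ρ, hρ, hσρ, hxρ⟩, rfl⟩, hτA⟩
    · exact fixed τ hτ hτA
    · exact fixed τ hτ hτA
    · obtain ⟨x, hx⟩ := hA
      obtain ⟨ρ, hρ, hxρ⟩ := hAvert x hx
      rw [Set.mem_singleton_iff] at hτ
      subst hτ
      exact key x hx ∅ (Finset.empty_inter A)
        (hK.2 ρ hρ _ (by simpa using hxρ) (Finset.insert_nonempty _ _))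
    · rw [Finset.insert_inter_of_notMem hzA] at hτA
      exact key x hx σ hτA
        (hK.2 ρ hρ _ (Finset.insert_subset hxρ hσρ) (Finset.insert_nonempty _ _))
end

section
/- Let K be a finite abstract simplicial complex, A a nonempty finite set of vertices of K with |A| = n, L = ⋃_{x∈A} St̄(x), z not a vertex of K, K′ = K ∪ (z*L), and K″ = {σ ∈ K′ : σ ∩ A = ∅}. Then the number of simplices of K″ is at most the number of simplices of K minus (n − 1). -/
/-- The map sending the simplices disjoint from `A` to themselves and replacing the (nonempty)
part of any other simplex inside `A` by the single vertex `z`. -/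
def collapseMap {V : Type*} [DecidableEq V] (A : Finset V) (z : V) (ρ : Finset V) : Finset V :=
  if ρ ∩ A = ∅ then ρ else insert z (ρ \ A)

theorem collapseMap_of_disjoint {V : Type*} [DecidableEq V] {A : Finset V} (z : V)
    {σ : Finset V} (h : σ ∩ A = ∅) : collapseMap A z σ = σ := by
  simp [collapseMap, h]

theorem collapseMap_insert {V : Type*} [DecidableEq V] {A : Finset V} (z : V)
    {σ : Finset V} (h : σ ∩ A = ∅) {x : V} (hx : x ∈ A) :
    collapseMap A z (insert x σ) = insert z σ := by
  have hne : insert x σ ∩ A ≠ ∅ :=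
    Finset.nonempty_iff_ne_empty.1 ⟨x, by simp [hx]⟩
  rw [collapseMap, if_neg hne, Finset.insert_sdiff_of_mem _ hx,
    Finset.sdiff_eq_self_of_disjoint (Finset.disjoint_iff_inter_eq_empty.2 h)]

/-- Let `K` be a finite abstract simplicial complex, `A` a nonempty
finite set of vertices of `K` with `|A| = n`, `L = ⋃_{x∈A} St̄(x)`, `z` not a vertex
of `K`, `K′ = K ∪ (z*L)` and `K″ = {σ ∈ K′ : σ ∩ A = ∅}`. Then the number of
simplices of `K″` is at most the number of simplices of `K` minus `n − 1`. -/
theorem collapse_reduces_simplex_count {V : Type*} [DecidableEq V] (K : Set (Finset V))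
    (hK : IsComplex K) (hfin : K.Finite)
    (A : Finset V) (hA : A.Nonempty) (hAvert : ∀ x ∈ A, ∃ σ ∈ K, x ∈ σ)
    (z : V) (hz : ∀ σ ∈ K, z ∉ σ) :
    {σ ∈ K ∪ Cone z {σ | ∃ x ∈ A, σ ∈ ClosedStar K x} | σ ∩ A = ∅}.ncard ≤
      K.ncard - (A.card - 1) := by
  obtain ⟨hne, hdown⟩ := hK
  obtain ⟨x₀, hx₀⟩ := hA
  have hsingle : ∀ x ∈ A, ({x} : Finset V) ∈ K := fun x hx => by
    obtain ⟨σ, hσ, hxσ⟩ := hAvert x hx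
    exact hdown σ hσ _ (by simpa using hxσ) (by simp)
  set B : Set (Finset V) := (singleton : V → Finset V) '' (A.erase x₀ : Finset V) with hB
  have hBK : B ⊆ K := by
    rintro _ ⟨x, hx, rfl⟩
    exact hsingle x (Finset.mem_of_mem_erase hx)
  have hBcard : B.ncard = A.card - 1 := by
    rw [hB, Set.ncard_image_of_injective _ Finset.singleton_injective, Set.ncard_coe_finset,
      Finset.card_erase_of_mem hx₀]
  have hfixed : ∀ σ ∈ K, σ ∩ A = ∅ → σ ∈ collapseMap A z '' (K \ B) := by
    refine fun σ hσ hσA => ⟨σ, ⟨hσ, ?_⟩, collapseMap_of_disjoint z hσA⟩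
    rintro ⟨x, hx, rfl⟩
    have hxA : x ∈ A := Finset.mem_of_mem_erase hx
    simp [hxA] at hσA
  have hcover : {σ ∈ K ∪ Cone z {σ | ∃ x ∈ A, σ ∈ ClosedStar K x} | σ ∩ A = ∅} ⊆
      collapseMap A z '' (K \ B) := by
    rintro σ ⟨hσ | (⟨x, hx, hσ, -⟩ | rfl) | ⟨σ, ⟨x, hx, hσ, τ, hτ, hστ, hxτ⟩, rfl⟩, hσA⟩
    · exact hfixed σ hσ hσA
    · exact hfixed σ hσ hσA
    · refine ⟨{x₀}, ⟨hsingle x₀ hx₀, ?_⟩, ?_⟩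
      · rintro ⟨x, hx, hxx⟩
        exact Finset.ne_of_mem_erase hx (Finset.singleton_injective hxx)
      · simpa using collapseMap_insert z (Finset.empty_inter A) hx₀
    · have hσA' : σ ∩ A = ∅ := Finset.subset_empty.1
        (hσA ▸ Finset.inter_subset_inter_right (Finset.subset_insert z σ))
      refine ⟨insert x σ, ⟨hdown τ hτ _ (Finset.insert_subset hxτ hστ) (by simp), ?_⟩,
        collapseMap_insert z hσA' hx⟩
      rintro ⟨y, hy, hyσ⟩
      -- If `insert x σ = {y}` with `y ∈ A`, a vertex `w` of `σ` equals `y`, so it lies in `σ ∩ A`.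
      obtain ⟨w, hw⟩ := hne σ hσ
      have hwy : w ∈ ({y} : Finset V) := by
        rw [hyσ]
        exact Finset.mem_insert_of_mem hw
      rw [Finset.mem_singleton] at hwy
      subst hwy
      have hwA : w ∈ σ ∩ A := Finset.mem_inter.2 ⟨hw, Finset.mem_of_mem_erase hy⟩
      simp [hσA'] at hwA
  have hfin' : (K \ B).Finite := hfin.subset Set.sdiff_subset
  calc _ ≤ (collapseMap A z '' (K \ B)).ncard := Set.ncard_le_ncard hcover (hfin'.image _)
    _ ≤ (K \ B).ncard := Set.ncard_image_le hfin'
    _ = K.ncard - (A.card - 1) := by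
      rw [Set.ncard_sdiff hBK (hfin.subset hBK), hBcard]
end

section
/- Let K be a finite abstract simplicial complex, let x_i, x_{j₁}, x_{j₂} be vertices of K, let z not be a vertex of K, and let K′ = K ∪ (z*(St̄(x_{j₁}) ∪ St̄(x_{j₂}))). Let L′ = St̄_{K′}(x_i) ∪ St̄_{K′}(x_{j₁}) be the union of the closed stars of x_i and x_{j₁} taken in K′. Then every toplex (inclusion-maximal simplex) of L′ that contains x_{j₁} also contains z. -/
/-- Let `K` be a finite abstract simplicial complex, `x_i, x_{j₁}, x_{j₂}`
vertices of `K`, `z` not a vertex of `K`, and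
`K′ = K ∪ (z * (St̄(x_{j₁}) ∪ St̄(x_{j₂})))`. Let
`L′ = St̄_{K′}(x_i) ∪ St̄_{K′}(x_{j₁})`. Then every toplex of `L′` containing `x_{j₁}`
also contains `z`. -/
theorem toplex_of_union_star_contains_cone_vertex {V : Type*} [DecidableEq V]
    (K : Set (Finset V)) (hK : IsComplex K) (hfin : K.Finite)
    (xi xj1 xj2 : V)
    (hxi : ∃ σ ∈ K, xi ∈ σ) (hxj1 : ∃ σ ∈ K, xj1 ∈ σ) (hxj2 : ∃ σ ∈ K, xj2 ∈ σ)
    (z : V) (hz : ∀ σ ∈ K, z ∉ σ) :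
    ∀ σ : Finset V,
      IsToplex
        (ClosedStar (K ∪ Cone z (ClosedStar K xj1 ∪ ClosedStar K xj2)) xi ∪
          ClosedStar (K ∪ Cone z (ClosedStar K xj1 ∪ ClosedStar K xj2)) xj1) σ →
      xj1 ∈ σ → z ∈ σ := by
  intro σ hσ hx
  by_contra hzσ
  obtain ⟨hmem, hmax⟩ := hσ
  have hK' : σ ∈ K ∪ Cone z (ClosedStar K xj1 ∪ ClosedStar K xj2) :=
    hmem.elim (fun h => h.1) (fun h => h.1)
  have hσK : σ ∈ K := by
    rcases hK' with h | ((h | h) | ⟨τ, -, rfl⟩)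
    · exact h
    · exact h.elim (fun h => h.1) (fun h => h.1)
    · rw [Set.mem_singleton_iff] at h
      subst h
      exact absurd (Finset.mem_singleton_self z) hzσ
    · exact absurd (Finset.mem_insert_self z τ) hzσ
  have hins : insert z σ ∈ K ∪ Cone z (ClosedStar K xj1 ∪ ClosedStar K xj2) :=
    Or.inr (Or.inr ⟨σ, Or.inl ⟨hσK, σ, hσK, Finset.Subset.refl σ, hx⟩, rfl⟩)
  have heq : σ = insert z σ :=
    hmax _ (Or.inr ⟨hins, _, hins, Finset.Subset.refl _, Finset.mem_insert_of_mem hx⟩)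
      (Finset.subset_insert z σ)
  exact hzσ (heq ▸ Finset.mem_insert_self z σ)
end

section
/- Let S be a finite abstract simplicial complex with vertex set X, let Y be the set of toplexes (inclusion-maximal simplices) of S, and define the relation R ⊆ X × Y by (x, τ) ∈ R iff x ∈ τ. Then the Dowker complex K_R equals S. -/
/-- Let `S` be a finite abstract simplicial complex, `Y` its set of
toplexes, and `R` the relation given by `(x, τ) ∈ R ↔ x ∈ τ`. Then the Dowker
complex `K_R` equals `S`. -/
theorem dowker_of_vertex_toplex_relation {V : Type*} (S : Set (Finset V))
    (hS : IsComplex S) (hfin : S.Finite) :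
    DowkerK (fun (x : V) (τ : {τ : Finset V // IsToplex S τ}) => x ∈ τ.1) = S := by
  ext σ
  constructor
  · rintro ⟨hne, τ, h⟩
    exact hS.2 τ.1 τ.2.1 σ h hne
  · intro hσ
    -- Finiteness of `S` provides a maximal simplex above `σ`.
    obtain ⟨τ, hle, hmax⟩ := hfin.exists_le_maximal hσ
    exact ⟨hS.1 σ hσ, ⟨τ, hmax.prop, fun ρ hρ h => hmax.eq_of_le hρ h⟩, fun x hx => hle hx⟩
end

section
/- Let R ⊆ X × Y be a relation between finite sets, let x_i, x_j ∈ X be distinct with R(x_i) ∪ R(x_j) ≠ ∅, and let R′ be the reduced relation obtained from R by replacing x_i and x_j with a new element z. Then the vertex set of the closed star of z in K_{R′} satisfies V(St̄_{K_{R′}}(z)) = ((V(St̄_{K_R}(x_i)) ∪ V(St̄_{K_R}(x_j))) \ {x_i, x_j}) ∪ {z}. -/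
/-- The vertex set of a collection of simplices: the union of its members. -/
def vertexSet {V : Type*} (K : Set (Finset V)) : Set V :=
  {v | ∃ σ ∈ K, v ∈ σ}

/-- A vertex `v` lies in the closed star of `x` exactly when `v` and `x` share a witness. -/
theorem mem_vertexSet_closedStar_iff {V Y : Type*} (R : V → Y → Prop) (x v : V) :
    v ∈ vertexSet (ClosedStar (DowkerK R) x) ↔ ∃ y, R v y ∧ R x y := by
  classical
  constructor
  · rintro ⟨σ, ⟨-, τ, ⟨-, y, hy⟩, hστ, hx⟩, hv⟩
    exact ⟨y, hy v (hστ hv), hy x hx⟩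
  · rintro ⟨y, hv, hx⟩
    have h : ({v, x} : Finset V) ∈ DowkerK R := ⟨by simp, y, by simp [hv, hx]⟩
    exact ⟨{v, x}, ⟨h, {v, x}, h, subset_rfl, by simp⟩, by simp⟩

/-- Let `R ⊆ X × Y` be a relation between finite sets, `xi ≠ xj` with
`R(xi) ∪ R(xj) ≠ ∅`, and `R′` the reduced relation replacing `xi, xj` by `z`. Then
`V(St̄_{K_{R′}}(z)) = ((V(St̄_{K_R}(xi)) ∪ V(St̄_{K_R}(xj))) \ {xi, xj}) ∪ {z}`
(the removal of `xi, xj` being encoded by the subtype `{x // x ≠ xi ∧ x ≠ xj}`). -/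
theorem vertexSet_star_of_new_vertex {X Y : Type*} [Fintype X] [Fintype Y]
    (R : X → Y → Prop) (xi xj : X) (hij : xi ≠ xj)
    (hne : ∃ y, R xi y ∨ R xj y) :
    vertexSet (ClosedStar (DowkerK (ReducedRel R xi xj)) none) =
      {none} ∪ {w | ∃ (x : X) (hx : x ≠ xi ∧ x ≠ xj), w = some ⟨x, hx⟩ ∧
        (x ∈ vertexSet (ClosedStar (DowkerK R) xi) ∪
          vertexSet (ClosedStar (DowkerK R) xj))} := by
  ext w
  simp only [Set.mem_union, Set.mem_singleton_iff, Set.mem_ofPred_eq, mem_vertexSet_closedStar_iff,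
    ← exists_or, ← and_or_left]
  rcases w with _ | ⟨x, hx⟩
  · simpa [ReducedRel] using hne
  · simp only [ReducedRel]
    constructor
    · exact fun h => Or.inr ⟨x, hx, rfl, h⟩
    · rintro (h | ⟨x', hx', h, h'⟩)
      · cases h
      · cases h
        exact h'
end

section
/- Let R ⊆ X × Y be a relation between finite sets, let x_i, x_j ∈ X be distinct, let R′ be the reduced relation obtained from R by replacing x_i and x_j with a new element z, and let x_k ∈ X \ {x_i, x_j} with R(x_k) ≠ ∅. Then: (a) if neither x_i nor x_j belongs to V(St̄_{K_R}(x_k)), then V(St̄_{K_{R′}}(x_k)) = V(St̄_{K_R}(x_k)); and (b) if both x_i and x_j belong to V(St̄_{K_R}(x_k)), then V(St̄_{K_{R′}}(x_k)) = (V(St̄_{K_R}(x_k)) \ {x_i, x_j}) ∪ {z}. -/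
/-- Let `R ⊆ X × Y` be a relation between finite sets, `xi ≠ xj`, `R′`
the reduced relation replacing `xi, xj` by `z`, and `xk ∈ X \ {xi, xj}` with
`R(xk) ≠ ∅`. Then:
(a) if neither `xi` nor `xj` lies in `V(St̄_{K_R}(xk))`, then
`V(St̄_{K_{R′}}(xk)) = V(St̄_{K_R}(xk))`; and
(b) if both `xi` and `xj` lie in `V(St̄_{K_R}(xk))`, then
`V(St̄_{K_{R′}}(xk)) = (V(St̄_{K_R}(xk)) \ {xi, xj}) ∪ {z}`
(removal of `xi, xj` being encoded by the subtype `{x // x ≠ xi ∧ x ≠ xj}`). -/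
theorem vertexSet_star_of_old_vertex {X Y : Type*} [Fintype X] [Fintype Y]
    (R : X → Y → Prop) (xi xj : X) (hij : xi ≠ xj)
    (xk : X) (hk : xk ≠ xi ∧ xk ≠ xj) (hRk : ∃ y, R xk y) :
    ((xi ∉ vertexSet (ClosedStar (DowkerK R) xk) ∧
        xj ∉ vertexSet (ClosedStar (DowkerK R) xk)) →
      vertexSet (ClosedStar (DowkerK (ReducedRel R xi xj)) (some ⟨xk, hk⟩)) =
        {w | ∃ (x : X) (hx : x ≠ xi ∧ x ≠ xj), w = some ⟨x, hx⟩ ∧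
          x ∈ vertexSet (ClosedStar (DowkerK R) xk)}) ∧
    ((xi ∈ vertexSet (ClosedStar (DowkerK R) xk) ∧
        xj ∈ vertexSet (ClosedStar (DowkerK R) xk)) →
      vertexSet (ClosedStar (DowkerK (ReducedRel R xi xj)) (some ⟨xk, hk⟩)) =
        {none} ∪ {w | ∃ (x : X) (hx : x ≠ xi ∧ x ≠ xj), w = some ⟨x, hx⟩ ∧
          x ∈ vertexSet (ClosedStar (DowkerK R) xk)}) := by
  simp only [mem_vertexSet_closedStar_iff]
  constructor
  · rintro ⟨hi, hj⟩
    ext (_ | ⟨x, hx⟩)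
    · simp only [mem_vertexSet_closedStar_iff, ReducedRel, Set.mem_ofPred_eq]
      constructor
      · rintro ⟨y, h | h, hy⟩
        · exact (hi ⟨y, h, hy⟩).elim
        · exact (hj ⟨y, h, hy⟩).elim
      · rintro ⟨x, hx, h, -⟩
        cases h
    · simp [mem_vertexSet_closedStar_iff, ReducedRel, hx]
  · rintro ⟨⟨y, hi, hy⟩, -⟩
    ext (_ | ⟨x, hx⟩)
    · simp only [mem_vertexSet_closedStar_iff, ReducedRel]
      exact ⟨fun _ => Or.inl rfl, fun _ => ⟨y, Or.inl hi, hy⟩⟩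
    · simp [mem_vertexSet_closedStar_iff, ReducedRel, hx]
end

section
/- Let R ⊆ X × Y be a relation between finite sets with R(x) ≠ ∅ for all x ∈ X, let x_i, x_j ∈ X be distinct, and let R′ be the reduced relation obtained from R by replacing x_i and x_j with a new element z. Let δ_max = max_{x∈X} |V(St̄_{K_R}(x))|. Then every vertex w of K_{R′} satisfies |V(St̄_{K_{R′}}(w))| ≤ 2·δ_max. -/
/-- Vertices of the closed star of `x` in a Dowker complex are the `v` with a witness `y` in common
with `x`. -/
lemma mem_vertexSet_closedStar {X Y : Type*} (R : X → Y → Prop) (x v : X) :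
    v ∈ vertexSet (ClosedStar (DowkerK R) x) ↔ ∃ y, R v y ∧ R x y := by
  classical
  constructor
  · rintro ⟨σ, ⟨-, τ, ⟨-, y, hy⟩, hστ, hx⟩, hv⟩
    exact ⟨y, hy v (hστ hv), hy x hx⟩
  · rintro ⟨y, hv, hx⟩
    have hpair : ({v, x} : Finset X) ∈ DowkerK R :=
      ⟨⟨v, by simp⟩, y, by simp [hv, hx]⟩
    exact ⟨{v, x}, ⟨hpair, {v, x}, hpair, subset_rfl, by simp⟩, by simp⟩

open Classical in
/-- The quotient map `X → X′` identifying `xi` and `xj` with the new element `z = none`. -/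
noncomputable def mergeMap {X : Type*} (xi xj : X) (x : X) :
    Option {x : X // x ≠ xi ∧ x ≠ xj} :=
  if h : x ≠ xi ∧ x ≠ xj then some ⟨x, h⟩ else none

/-- `R′(w)` is the union of the rows of `R` over the fibre of `mergeMap` above `w`. -/
lemma reducedRel_iff {X Y : Type*} (R : X → Y → Prop) (xi xj : X)
    (w : Option {x : X // x ≠ xi ∧ x ≠ xj}) (y : Y) :
    ReducedRel R xi xj w y ↔ ∃ x, mergeMap xi xj x = w ∧ R x y := by
  rcases w with _ | ⟨x, hx⟩
  · constructor
    · rintro (h | h)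
      · exact ⟨xi, by simp [mergeMap], h⟩
      · exact ⟨xj, by simp [mergeMap], h⟩
    · rintro ⟨x, hx, h⟩
      by_cases hi : x = xi
      · exact Or.inl (hi ▸ h)
      · by_cases hj : x = xj
        · exact Or.inr (hj ▸ h)
        · simp [mergeMap, hi, hj] at hx
  · constructor
    · intro h
      exact ⟨x, by simp [mergeMap, hx], h⟩
    · rintro ⟨u, hmerge, h⟩
      by_cases hn : u ≠ xi ∧ u ≠ xj
      · simp only [mergeMap, dif_pos hn, Option.some.injEq, Subtype.mk.injEq] at hmerge
        exact hmerge ▸ h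
      · simp [mergeMap, dif_neg hn] at hmerge

/-- Fibres of `mergeMap` have at most two points. -/
lemma exists_pair_fibre {X : Type*} (xi xj : X) (w : Option {x : X // x ≠ xi ∧ x ≠ xj}) :
    ∃ a b, ∀ x, mergeMap xi xj x = w → x = a ∨ x = b := by
  rcases w with _ | ⟨a, ha⟩
  · refine ⟨xi, xj, fun x hx => ?_⟩
    by_contra! hn
    simp [mergeMap, hn] at hx
  · refine ⟨a, a, fun x hx => Or.inl ?_⟩
    by_cases hn : x ≠ xi ∧ x ≠ xj
    · simpa [mergeMap, hn] using hx
    · simp [mergeMap, dif_neg hn] at hx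

/-- Let `R ⊆ X × Y` be a relation between finite sets with `R(x) ≠ ∅`
for all `x`, `xi ≠ xj`, and `R′` the reduced relation replacing `xi, xj` by `z`.
With `δ_max = max_{x∈X} |V(St̄_{K_R}(x))|`, every vertex `w` of `K_{R′}` satisfies
`|V(St̄_{K_{R′}}(w))| ≤ 2·δ_max`. -/
theorem star_vertex_count_after_reduction {X Y : Type*} [Fintype X] [Fintype Y]
    (R : X → Y → Prop) (hR : ∀ x, ∃ y, R x y)
    (xi xj : X) (hij : xi ≠ xj) :
    ∀ w : Option {x : X // x ≠ xi ∧ x ≠ xj},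
      (vertexSet (ClosedStar (DowkerK (ReducedRel R xi xj)) w)).ncard ≤
        2 * Finset.univ.sup (fun x : X => (vertexSet (ClosedStar (DowkerK R) x)).ncard) := by
  intro w
  set δ := Finset.univ.sup (fun x : X => (vertexSet (ClosedStar (DowkerK R) x)).ncard) with hδ
  have hle : ∀ x, (vertexSet (ClosedStar (DowkerK R) x)).ncard ≤ δ := fun x =>
    Finset.le_sup (f := fun x : X => (vertexSet (ClosedStar (DowkerK R) x)).ncard)
      (Finset.mem_univ x)
  obtain ⟨a, b, hab⟩ := exists_pair_fibre xi xj w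
  have hsub : vertexSet (ClosedStar (DowkerK (ReducedRel R xi xj)) w) ⊆
      mergeMap xi xj '' (vertexSet (ClosedStar (DowkerK R) a) ∪
        vertexSet (ClosedStar (DowkerK R) b)) := by
    intro v hv
    obtain ⟨y, hvy, hwy⟩ := (mem_vertexSet_closedStar _ _ _).1 hv
    obtain ⟨u, hvmerge, hvY⟩ := (reducedRel_iff ..).1 hvy
    obtain ⟨x, hx, hxy⟩ := (reducedRel_iff ..).1 hwy
    have hmem := (mem_vertexSet_closedStar R x u).2 ⟨y, hvY, hxy⟩
    refine ⟨u, ?_, hvmerge⟩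
    rcases hab x hx with rfl | rfl
    · exact Or.inl hmem
    · exact Or.inr hmem
  calc _ ≤ _ := Set.ncard_le_ncard hsub (Set.toFinite _)
    _ ≤ _ := Set.ncard_image_le (Set.toFinite _)
    _ ≤ _ := Set.ncard_union_le _ _
    _ ≤ 2 * δ := by have := hle a; have := hle b; omega
end
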